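/- Let d ≥ 2 be an even integer and n = d + 2. Let y be a nonzero solution of the Schrödinger equation with parameters (α, λ) that is subdominant in every sector S₀, S₂, S₄, …, S_{n−2}. Then y has only finitely many zeros, each zero of y is simple (y and y' do not vanish simultaneously), and there exist polynomials Q and φ with complex coefficients such that y(z) = Q(z)·e^{φ(z)} for all z ∈ ℂ, where deg Q equals the number of zeros of y and deg φ = (d+2)/2. -/

import Mathlib

open Complex Filter Topology

/-- The polynomial potential `P_α(z) = z^d + α_{d-1} z^{d-1} + ⋯ + α₁ z`. -/
noncomputable def Pol (d : ℕ) (α : Fin (d - 1) → ℂ) (z : ℂ) : ℂ :=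
  z ^ d + ∑ i : Fin (d - 1), α i * z ^ ((i : ℕ) + 1)

/-- `y` is an (entire) solution of the Schrödinger equation `y'' = (P_α - λ) y`. -/
def IsSol (d : ℕ) (α : Fin (d - 1) → ℂ) (lam : ℂ) (y : ℂ → ℂ) : Prop :=
  Differentiable ℂ y ∧ ∀ z : ℂ, deriv (deriv y) z = (Pol d α z - lam) * y z

/-- `θ` is a ray direction of the Stokes sector `S_j`. -/
def DirIn (n j : ℕ) (θ : ℝ) : Prop :=
  |θ - 2 * Real.pi * j / n| < Real.pi / n

/-- `y` is subdominant in the Stokes sector `S_j`: it tends to `0` along every ray in `S_j`. -/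
def Subdominant (n j : ℕ) (y : ℂ → ℂ) : Prop :=
  ∀ θ : ℝ, DirIn n j θ →
    Tendsto (fun r : ℝ => y ((r : ℂ) * Complex.exp (θ * Complex.I))) atTop (𝓝 0)

/-!
Complete the square in the potential: `P_α - λ = p² + ϱ` with `p` monic of degree `k = d / 2` and
`deg ϱ < k`, and let `φ' = -p`. Along a ray `r ↦ r e`, `|e| = 1`, the amplitudes
`d/dr y(r e) ± e p(r e) y(r e)` behave, up to powers of `r`, like `exp (± ∫ e p)`. Where
`Re (e^{k+1}) < 0` both are dominated by `|exp (φ(r e))|`; where `Re (e^{k+1}) > 0`, the ray lies in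
a sector in which `y` decays, and decay excludes the growing solution, leaving the same bound. So
`u = y e^{-φ}` is polynomially bounded on all rays with `Re (e^{k+1}) ≠ 0`, with a uniform exponent.
Since `u` has finite order, Phragmén–Lindelöf and Liouville make it a polynomial `Q`. Uniqueness for
the differential equation makes the zeros of `y`, hence the roots of `Q`, simple.
-/

open Asymptotics Bornology
open scoped Polynomial

section Polynomials

open Polynomial

theorem exists_degree_add_sq_sub_sq_lt {K : Type*} [Field K] [NeZero (2 : K)] {p G : K[X]}
    (hp : p.Monic) (hle : p.degree ≤ G.degree) (hlt : G.degree < (p ^ 2).degree) :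
    ∃ h : K[X], h.degree < p.degree ∧ (G + p ^ 2 - (p + h) ^ 2).degree < G.degree := by
  have hG : G ≠ 0 := fun h0 => hp.ne_zero (by simpa [h0] using hle)
  have hdiv : p.degree + (G /ₘ p).degree = G.degree := degree_add_divByMonic hp hle
  have hquot : G /ₘ p ≠ 0 := fun h0 => hG (by simpa [h0] using hdiv.symm)
  have hhalf : (2 : K[X]) * C 2⁻¹ = 1 := by
    rw [← map_ofNat C, ← C_mul, mul_inv_cancel₀ two_ne_zero, C_1]
  have hhalf_deg : (C 2⁻¹ * (G /ₘ p)).degree = (G /ₘ p).degree :=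
    degree_C_mul (inv_ne_zero two_ne_zero)
  have hcorrected : G + p ^ 2 - (p + C 2⁻¹ * (G /ₘ p)) ^ 2 = G %ₘ p - (C 2⁻¹ * (G /ₘ p)) ^ 2 := by
    linear_combination -modByMonic_add_div G p + (-p * (G /ₘ p)) * hhalf
  have hquot_lt : (G /ₘ p).degree < p.degree := by
    rw [← hdiv, degree_pow, two_nsmul] at hlt
    exact lt_of_add_lt_add_left hlt
  -- With half the quotient as `h`, the cross term `2 p h` cancels all of `G` but `G %ₘ p`.
  refine ⟨C 2⁻¹ * (G /ₘ p), hhalf_deg ▸ hquot_lt, ?_⟩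
  rw [hcorrected]
  refine (degree_sub_le _ _).trans_lt (max_lt ((degree_modByMonic_lt G hp).trans_le hle) ?_)
  rw [degree_pow, hhalf_deg, two_nsmul, ← hdiv]
  exact WithBot.add_lt_add_right (degree_ne_bot.2 hquot) hquot_lt

theorem exists_monic_degree_sub_sq_lt {K : Type*} [Field K] [NeZero (2 : K)] {F : K[X]} {k : ℕ}
    (hF : F.Monic) (hFk : F.natDegree = 2 * k) :
    ∃ p : K[X], p.Monic ∧ p.natDegree = k ∧ (F - p ^ 2).degree < k := by
  obtain ⟨p, ⟨hp, hpk⟩, hmin⟩ := exists_minimalFor_of_wellFoundedLT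
    (fun p : K[X] => p.Monic ∧ p.natDegree = k) (fun p => (F - p ^ 2).degree)
    ⟨X ^ k, monic_X_pow k, natDegree_X_pow k⟩
  refine ⟨p, hp, hpk, ?_⟩
  rw [← hpk, ← degree_eq_natDegree hp.ne_zero]
  by_contra! hle
  have hsq : F.degree = (p ^ 2).degree := by
    rw [degree_eq_natDegree hF.ne_zero, degree_eq_natDegree (hp.pow 2).ne_zero, hp.natDegree_pow,
      hpk, hFk]
  have hlt : (F - p ^ 2).degree < (p ^ 2).degree := hsq ▸
    degree_sub_lt_left hsq hF.ne_zero (hF.leadingCoeff.trans (hp.pow 2).leadingCoeff.symm)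
  obtain ⟨h, hh, hdecr⟩ := exists_degree_add_sq_sub_sq_lt hp hle hlt
  rw [sub_add_cancel] at hdecr
  exact (hmin ⟨hp.add_of_left hh, (natDegree_add_eq_left_of_degree_lt hh).trans hpk⟩
    hdecr.le).not_gt hdecr

theorem polynomial_derivative_surjective {K : Type*} [Field K] [CharZero K] :
    Function.Surjective (derivative : K[X] → K[X]) := fun p => by
  induction p using Polynomial.induction_on' with
  | add p q hp hq =>
    obtain ⟨P, rfl⟩ := hp
    obtain ⟨Q, rfl⟩ := hq
    exact ⟨P + Q, derivative_add⟩
  | monomial n a =>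
    refine ⟨monomial (n + 1) (a / (n + 1)), ?_⟩
    rw [derivative_monomial, Nat.cast_succ, div_mul_cancel₀ _ n.cast_add_one_ne_zero,
      Nat.add_sub_cancel]

theorem tendsto_ofReal_mul_exp_cobounded (θ : ℝ) :
    Tendsto (fun r : ℝ => (r : ℂ) * exp (θ * I)) atTop (cobounded ℂ) := by
  rw [← tendsto_norm_atTop_iff_cobounded]
  simpa [Complex.norm_exp_ofReal_mul_I] using tendsto_abs_atTop_atTop

theorem tendsto_re_eval_ray_div_pow {G : ℂ[X]} (hG : G.Monic) (θ : ℝ) :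
    Tendsto (fun r : ℝ => (G.eval (r * exp (θ * I))).re / r ^ G.natDegree) atTop
      (𝓝 (Real.cos (G.natDegree * θ))) := by
  have hratio : Tendsto (fun z => G.eval z / z ^ G.natDegree) (cobounded ℂ) (𝓝 1) := by
    have := isEquivalent_cobounded_leading_monomial (P := G)
    simp only [hG.leadingCoeff, one_mul] at this
    refine (isEquivalent_iff_tendsto_one ?_).1 this
    filter_upwards [eventually_ne_cobounded 0] with z hz using pow_ne_zero _ hz
  have hlim := (continuous_re.tendsto _).comp
    ((hratio.comp (tendsto_ofReal_mul_exp_cobounded θ)).mul_const (exp ((G.natDegree * θ : ℝ) * I)))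
  rw [one_mul, exp_ofReal_mul_I_re] at hlim
  refine hlim.congr fun r => ?_
  have hexp : exp ((G.natDegree * θ : ℝ) * I) = exp (θ * I) ^ G.natDegree := by
    rw [← Complex.exp_nat_mul]
    push_cast
    ring_nf
  rw [Function.comp_apply, Function.comp_apply, hexp, mul_pow, div_mul_eq_mul_div,
    mul_div_mul_right _ _ (pow_ne_zero _ (exp_ne_zero _)), ← ofReal_pow, div_ofReal_re]

theorem tendsto_re_eval_ray_atTop {G : ℂ[X]} (hG : G.Monic) (hdeg : G.natDegree ≠ 0) {θ : ℝ}
    (hθ : 0 < Real.cos (G.natDegree * θ)) :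
    Tendsto (fun r : ℝ => (G.eval (r * exp (θ * I))).re) atTop atTop := by
  refine ((tendsto_re_eval_ray_div_pow hG θ).pos_mul_atTop hθ
    (tendsto_pow_atTop hdeg)).congr' ?_
  filter_upwards [eventually_gt_atTop 0] with r hr
  field_simp

theorem tendsto_re_eval_ray_atBot {G : ℂ[X]} (hG : G.Monic) (hdeg : G.natDegree ≠ 0) {θ : ℝ}
    (hθ : Real.cos (G.natDegree * θ) < 0) :
    Tendsto (fun r : ℝ => (G.eval (r * exp (θ * I))).re) atTop atBot := by
  refine ((tendsto_re_eval_ray_div_pow hG θ).neg_mul_atTop hθ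
    (tendsto_pow_atTop hdeg)).congr' ?_
  filter_upwards [eventually_gt_atTop 0] with r hr
  field_simp

end Polynomials

section LinearODE

theorem norm_le_mul_exp_of_hasDerivAt_system {u v G : ℝ → ℂ} {h : ℂ} {ω T : ℝ} (hω : 1 ≤ ω)
    (hT : 0 ≤ T) (hu : ∀ t, HasDerivAt u (h * v t) t)
    (hv : ∀ t, HasDerivAt v (h * (G t * u t)) t) (hG : ∀ t ∈ Set.Ico 0 T, ‖G t‖ ≤ ω ^ 2) :
    ‖u T‖ ≤ max ‖u 0‖ ‖v 0‖ * Real.exp (ω * ‖h‖ * T) := by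
  have hω0 : 0 < ω := one_pos.trans_le hω
  -- Weighting `u` by `ω` balances the two equations: both coefficients become at most `ω ‖h‖`.
  set w : ℝ → ℂ × ℂ := fun t => (ω * u t, v t)
  have hw : ∀ t, HasDerivAt w (ω * (h * v t), h * (G t * u t)) t := fun t =>
    ((hu t).const_mul (ω : ℂ)).prodMk (hv t)
  have hu_le (t : ℝ) : ω * ‖u t‖ ≤ ‖w t‖ := by simp [w, abs_of_pos hω0]
  have hv_le (t : ℝ) : ‖v t‖ ≤ ‖w t‖ := norm_snd_le (w t)
  have hbound : ∀ t ∈ Set.Ico 0 T,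
      ‖((ω * (h * v t), h * (G t * u t)) : ℂ × ℂ)‖ ≤ ω * ‖h‖ * ‖w t‖ + 0 := by
    intro t ht
    rw [add_zero, Prod.norm_def]
    refine max_le ?_ ?_
    · rw [norm_mul, norm_mul, norm_real, Real.norm_of_nonneg hω0.le, mul_assoc]
      gcongr
      exact hv_le t
    · calc ‖h * (G t * u t)‖ = ‖h‖ * (‖G t‖ * ‖u t‖) := by rw [norm_mul, norm_mul]
        _ ≤ ‖h‖ * (ω ^ 2 * ‖u t‖) := by gcongr; exact hG t ht
        _ = ω * ‖h‖ * (ω * ‖u t‖) := by ring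
        _ ≤ _ := by gcongr; exact hu_le t
  have hinit : ‖w 0‖ ≤ ω * max ‖u 0‖ ‖v 0‖ := by
    rw [Prod.norm_def]
    refine max_le ?_ ((le_max_right _ _).trans (le_mul_of_one_le_left (by positivity) hω))
    simp [w, abs_of_pos hω0, hω0]
  have hgronwall := norm_le_gronwallBound_of_norm_deriv_right_le
    (fun t _ => (hw t).continuousAt.continuousWithinAt) (fun t _ => (hw t).hasDerivWithinAt)
    hinit hbound T (Set.right_mem_Icc.2 hT)
  rw [gronwallBound_ε0, sub_zero, mul_assoc] at hgronwall
  exact le_of_mul_le_mul_left ((hu_le T).trans hgronwall) hω0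

variable {y y' F : ℂ → ℂ}

theorem norm_le_mul_exp_of_hasDerivAt (hy : ∀ z, HasDerivAt y (y' z) z)
    (hy' : ∀ z, HasDerivAt y' (F z * y z) z) {z₀ z : ℂ} {ω : ℝ} (hω : 1 ≤ ω)
    (hF : ∀ ζ ∈ segment ℝ z₀ z, ‖F ζ‖ ≤ ω ^ 2) :
    ‖y z‖ ≤ max ‖y z₀‖ ‖y' z₀‖ * Real.exp (ω * ‖z - z₀‖) := by
  set γ : ℝ → ℂ := fun t => z₀ + t * (z - z₀)
  have hγ (t : ℝ) : HasDerivAt γ (z - z₀) t :=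
    (((hasDerivAt_id' t).ofReal_comp.mul_const (z - z₀)).const_add z₀).congr_deriv (by simp)
  have hFγ : ∀ t ∈ Set.Ico (0 : ℝ) 1, ‖F (γ t)‖ ≤ ω ^ 2 := fun t ht => hF _ <| by
    rw [segment_eq_image']
    exact ⟨t, Set.Ico_subset_Icc_self ht, by simp [γ]⟩
  simpa [γ] using norm_le_mul_exp_of_hasDerivAt_system hω zero_le_one
    (fun t => (hy _).scomp t (hγ t)) (fun t => (hy' _).scomp t (hγ t)) hFγ

theorem deriv_ne_zero_of_eq_zero (hy : ∀ z, HasDerivAt y (y' z) z)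
    (hy' : ∀ z, HasDerivAt y' (F z * y z) z) (hF : Continuous F) (hy0 : y ≠ 0) {z₀ : ℂ}
    (hz₀ : y z₀ = 0) : y' z₀ ≠ 0 := by
  refine fun hz₀' => hy0 (funext fun z => norm_le_zero_iff.1 ?_)
  have hcompact : IsCompact (segment ℝ z₀ z) := by
    rw [segment_eq_image']
    exact isCompact_Icc.image (by fun_prop)
  obtain ⟨M, hM⟩ := hcompact.exists_bound_of_continuousOn hF.continuousOn
  have hω : 1 ≤ max 1 M := le_max_left _ _
  have := norm_le_mul_exp_of_hasDerivAt hy hy' hω fun ζ hζ =>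
    (hM ζ hζ).trans ((le_max_right _ _).trans (le_self_pow₀ hω two_ne_zero))
  simpa [hz₀, hz₀'] using this

end LinearODE

section ExponentialGrowth

/-- `f` has order at most `m` and, if the order is `m`, finite type. The shift `1 + ‖z‖` turns the
usual bound for large `z` into one valid on the whole plane. -/
def HasExpGrowth (m : ℕ) (f : ℂ → ℂ) : Prop :=
  ∃ K : ℝ, ∀ z, ‖f z‖ ≤ Real.exp (K * (1 + ‖z‖) ^ m)

theorem exists_norm_eval_le_mul_pow {p : ℂ[X]} {m : ℕ} (hp : p.natDegree ≤ m) :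
    ∃ C, 0 ≤ C ∧ ∀ z, ‖p.eval z‖ ≤ C * (1 + ‖z‖) ^ m := by
  refine ⟨∑ i ∈ Finset.range (p.natDegree + 1), ‖p.coeff i‖, by positivity, fun z => ?_⟩
  rw [Polynomial.eval_eq_sum_range, Finset.sum_mul]
  refine norm_sum_le_of_le _ fun i hi => ?_
  rw [norm_mul, norm_pow]
  gcongr
  calc ‖z‖ ^ i ≤ (1 + ‖z‖) ^ i := by gcongr; simp
    _ ≤ (1 + ‖z‖) ^ m :=
      pow_le_pow_right₀ (by simp) ((Finset.mem_range_succ_iff.1 hi).trans hp)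

namespace HasExpGrowth

variable {m : ℕ} {f g : ℂ → ℂ}

theorem of_le {C K : ℝ} (h : ∀ z, ‖f z‖ ≤ C * Real.exp (K * (1 + ‖z‖) ^ m)) :
    HasExpGrowth m f := by
  refine ⟨|C| + K, fun z => (h z).trans ?_⟩
  have hs : 1 ≤ (1 + ‖z‖) ^ m := one_le_pow₀ (by simp)
  calc C * Real.exp (K * (1 + ‖z‖) ^ m)
      ≤ Real.exp (|C| * (1 + ‖z‖) ^ m) * Real.exp (K * (1 + ‖z‖) ^ m) := by
        gcongr
        linarith [Real.add_one_le_exp (|C| * (1 + ‖z‖) ^ m), le_abs_self C,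
          le_mul_of_one_le_right (abs_nonneg C) hs]
    _ = Real.exp ((|C| + K) * (1 + ‖z‖) ^ m) := by rw [← Real.exp_add, add_mul]

theorem mul (hf : HasExpGrowth m f) (hg : HasExpGrowth m g) :
    HasExpGrowth m fun z => f z * g z := by
  obtain ⟨K, hK⟩ := hf
  obtain ⟨L, hL⟩ := hg
  refine ⟨K + L, fun z => ?_⟩
  rw [norm_mul, add_mul, Real.exp_add]
  exact mul_le_mul (hK z) (hL z) (norm_nonneg _) (Real.exp_nonneg _)

theorem exp_eval {p : ℂ[X]} (hp : p.natDegree ≤ m) : HasExpGrowth m fun z => exp (p.eval z) := by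
  obtain ⟨C, -, hC⟩ := exists_norm_eval_le_mul_pow hp
  exact ⟨C, fun z => (norm_exp_le_exp_norm _).trans (Real.exp_le_exp.2 (hC z))⟩

theorem of_hasDerivAt {y y' : ℂ → ℂ} {F : ℂ[X]} {k : ℕ} (hF : F.natDegree ≤ 2 * k)
    (hy : ∀ z, HasDerivAt y (y' z) z) (hy' : ∀ z, HasDerivAt y' (F.eval z * y z) z) :
    HasExpGrowth (k + 1) y := by
  obtain ⟨C, hC₀, hC⟩ := exists_norm_eval_le_mul_pow hF
  refine of_le (C := max ‖y 0‖ ‖y' 0‖) (K := C + 1) fun z => ?_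
  have hω : 1 ≤ (C + 1) * (1 + ‖z‖) ^ k :=
    one_le_mul_of_one_le_of_one_le (by simpa) (one_le_pow₀ (by simp))
  refine (norm_le_mul_exp_of_hasDerivAt hy hy' (z₀ := 0) hω fun ζ hζ => ?_).trans ?_
  · have hζz : ‖ζ‖ ≤ ‖z‖ := by simpa using norm_sub_le_of_mem_segment hζ
    calc ‖F.eval ζ‖ ≤ C * (1 + ‖ζ‖) ^ (2 * k) := hC ζ
      _ ≤ (C + 1) ^ 2 * (1 + ‖z‖) ^ (2 * k) := by gcongr; nlinarith
      _ = ((C + 1) * (1 + ‖z‖) ^ k) ^ 2 := by ring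
  · rw [sub_zero, mul_assoc, pow_succ]
    gcongr
    simp

theorem dslope_zero (hf : Differentiable ℂ f) (h : HasExpGrowth m f) :
    HasExpGrowth m (dslope f 0) := by
  obtain ⟨K, hK⟩ := h
  have hcont : Continuous (dslope f 0) := continuous_iff_continuousAt.2 fun z => by
    obtain rfl | hz := eq_or_ne z 0
    · exact continuousAt_dslope_same.2 (hf 0)
    · exact (continuousAt_dslope_of_ne hz).2 (hf z).continuousAt
  obtain ⟨M, hM⟩ := (isCompact_closedBall (0 : ℂ) 1).exists_bound_of_continuousOn hcont.continuousOn
  refine of_le (C := |M| + ‖f 0‖ + 1) (K := |K|) fun z => ?_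
  have hexp : 1 ≤ Real.exp (|K| * (1 + ‖z‖) ^ m) := Real.one_le_exp (by positivity)
  have hfz : ‖f z‖ ≤ Real.exp (|K| * (1 + ‖z‖) ^ m) :=
    (hK z).trans (by gcongr; exact le_abs_self K)
  suffices ‖dslope f 0 z‖ ≤ |M| + ‖f 0‖ + ‖f z‖ by
    nlinarith [abs_nonneg M, norm_nonneg (f 0)]
  obtain hz | hz := le_total ‖z‖ 1
  · linarith [hM z (by simpa using hz), le_abs_self M, norm_nonneg (f 0), norm_nonneg (f z)]
  · have hz0 : z ≠ 0 := norm_pos_iff.1 (one_pos.trans_le hz)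
    rw [dslope_of_ne _ hz0, slope_def_field, sub_zero, norm_div]
    linarith [div_le_self (norm_nonneg (f z - f 0)) hz, norm_sub_le (f z) (f 0), abs_nonneg M]

end HasExpGrowth

end ExponentialGrowth

section PhragmenLindelof

variable {m : ℕ} {f : ℂ → ℂ}

theorem norm_comp_exp_le_of_hasExpGrowth (hf : Differentiable ℂ f) (hgrowth : HasExpGrowth m f)
    {a b C : ℝ} (hab : a < b) (hm : m * (b - a) < Real.pi)
    (ha : ∀ w : ℂ, w.im = a → ‖f (exp w)‖ ≤ C) (hb : ∀ w : ℂ, w.im = b → ‖f (exp w)‖ ≤ C)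
    {w : ℂ} (haw : a ≤ w.im) (hwb : w.im ≤ b) : ‖f (exp w)‖ ≤ C := by
  obtain ⟨K, hK⟩ := hgrowth
  refine PhragmenLindelof.horizontal_strip (f := f ∘ exp) (hf.comp differentiable_exp).diffContOnCl
    ⟨m, (lt_div_iff₀ (sub_pos.2 hab)).2 hm, |K| * 2 ^ m, ?_⟩ ha hb haw hwb
  refine .of_norm_le fun z => (hK _).trans ?_
  rw [Real.exp_le_exp, Complex.norm_exp]
  have hbase : 1 + Real.exp z.re ≤ 2 * Real.exp |z.re| := by
    linarith [Real.one_le_exp (abs_nonneg z.re), Real.exp_le_exp.2 (le_abs_self z.re)]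
  calc K * (1 + Real.exp z.re) ^ m ≤ |K| * (2 * Real.exp |z.re|) ^ m := by
        gcongr
        exact le_abs_self K
    _ = |K| * 2 ^ m * Real.exp (m * |z.re|) := by rw [mul_pow, ← Real.exp_nat_mul, mul_assoc]

theorem exists_forall_ray_norm_le (hf : Continuous f) {θ : ℝ}
    (h : (fun r : ℝ => f (r * exp (θ * I))) =O[atTop] fun _ => (1 : ℝ)) :
    ∃ C, ∀ r : ℝ, 0 ≤ r → ‖f (r * exp (θ * I))‖ ≤ C := by
  obtain ⟨C, hC⟩ := h.bound
  obtain ⟨R, hR⟩ := eventually_atTop.1 hC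
  obtain ⟨M, hM⟩ := (isCompact_Icc (a := (0 : ℝ)) (b := R)).exists_bound_of_continuousOn
    (f := fun r : ℝ => f (r * exp (θ * I))) (by fun_prop)
  refine ⟨max C M, fun r hr => ?_⟩
  obtain hrR | hRr := le_total r R
  · exact (hM r ⟨hr, hrR⟩).trans (le_max_right _ _)
  · exact (hR r hRr).trans (by simp)

theorem exists_nhds_ray_norm_le (hf : Differentiable ℂ f) (hgrowth : HasExpGrowth m f)
    (hrays : Dense {θ : ℝ | ∃ C, ∀ r : ℝ, 0 ≤ r → ‖f (r * exp (θ * I))‖ ≤ C}) (θ : ℝ) :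
    ∃ s ∈ 𝓝 θ, ∃ C, ∀ η ∈ s, ∀ r : ℝ, 0 ≤ r → ‖f (r * exp (η * I))‖ ≤ C := by
  set δ := Real.pi / (2 * (m + 1))
  have hδ : 0 < δ := by positivity
  obtain ⟨a, ⟨A, hA⟩, ha₁, ha₂⟩ := hrays.exists_between (sub_lt_self θ hδ)
  obtain ⟨b, ⟨B, hB⟩, hb₁, hb₂⟩ := hrays.exists_between (lt_add_of_pos_right θ hδ)
  have hexp (w : ℂ) : exp w = Real.exp w.re * exp (w.im * I) := by
    rw [ofReal_exp, ← Complex.exp_add, re_add_im]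
  have hm : m * (b - a) < Real.pi := by
    have : (m : ℝ) * (2 * δ) + 2 * δ = Real.pi := by simp only [δ]; field_simp
    nlinarith [m.cast_nonneg (α := ℝ)]
  refine ⟨Set.Icc a b, Icc_mem_nhds ha₂ hb₁, max A B, fun η hη r hr => ?_⟩
  obtain rfl | hr := hr.eq_or_lt
  · have hf0 : ‖f 0‖ ≤ A := by simpa using hA 0 le_rfl
    simp [hf0]
  have := norm_comp_exp_le_of_hasExpGrowth hf hgrowth (C := max A B) (ha₂.trans hb₁) hm
    (fun w hw => by rw [hexp, hw]; exact (hA _ (Real.exp_nonneg _)).trans (le_max_left _ _))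
    (fun w hw => by rw [hexp, hw]; exact (hB _ (Real.exp_nonneg _)).trans (le_max_right _ _))
    (w := ⟨Real.log r, η⟩) hη.1 hη.2
  rwa [hexp, Real.exp_log hr] at this

theorem isBounded_range_of_dense_rays (hf : Differentiable ℂ f) (hgrowth : HasExpGrowth m f)
    (hrays : Dense {θ : ℝ | (fun r : ℝ => f (r * exp (θ * I))) =O[atTop] fun _ => (1 : ℝ)}) :
    IsBounded (Set.range f) := by
  have hrays' := hrays.mono fun θ hθ => exists_forall_ray_norm_le hf.continuous hθ
  obtain ⟨C, hC⟩ : ∃ C, ∀ η ∈ Set.Icc (-Real.pi) Real.pi, ∀ r : ℝ, 0 ≤ r →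
      ‖f (r * exp (η * I))‖ ≤ C := by
    refine isCompact_Icc.induction_on ⟨0, by simp⟩ (fun s t hst => ?_) (fun s t => ?_) fun θ _ => ?_
    · exact Exists.imp fun C hC η hη => hC η (hst hη)
    · rintro ⟨C, hC⟩ ⟨D, hD⟩
      refine ⟨max C D, fun η hη r hr => le_max_iff.2 ?_⟩
      exact hη.imp (fun h => hC η h r hr) fun h => hD η h r hr
    · obtain ⟨s, hs, h⟩ := exists_nhds_ray_norm_le hf hgrowth hrays' θ
      exact ⟨s, mem_nhdsWithin_of_mem_nhds hs, h⟩
  refine isBounded_iff_forall_norm_le.2 ⟨C, Set.forall_mem_range.2 fun z => ?_⟩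
  simpa using hC z.arg ⟨(neg_pi_lt_arg z).le, arg_le_pi z⟩ ‖z‖ (norm_nonneg z)

theorem isBigO_dslope_zero_ray {N : ℕ} {θ : ℝ}
    (h : (fun r : ℝ => f (r * exp (θ * I))) =O[atTop] fun r => r ^ (N + 1)) :
    (fun r : ℝ => dslope f 0 (r * exp (θ * I))) =O[atTop] fun r => r ^ N := by
  have hconst : (fun _ : ℝ => f 0) =O[atTop] (fun r : ℝ => r ^ (N + 1)) :=
    (isLittleO_const_left.2 (.inr (tendsto_norm_atTop_atTop.comp
      (tendsto_pow_atTop N.succ_ne_zero)))).isBigO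
  have hinv : (fun r : ℝ => (r * exp (θ * I))⁻¹) =O[atTop] (fun r : ℝ => r⁻¹) :=
    .of_bound 1 (.of_forall fun r => by simp)
  refine ((h.sub hconst).mul hinv).congr' ?_ ?_
  all_goals filter_upwards [eventually_ne_atTop 0] with r hr
  · rw [dslope_of_ne _ (mul_ne_zero (ofReal_ne_zero.2 hr) (exp_ne_zero _)), slope_def_field,
      sub_zero, div_eq_mul_inv]
  · rw [pow_succ, mul_inv_cancel_right₀ hr]

theorem exists_polynomial_of_dense_rays (hf : Differentiable ℂ f) (hgrowth : HasExpGrowth m f)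
    (N : ℕ) (hrays : Dense {θ : ℝ | (fun r : ℝ => f (r * exp (θ * I))) =O[atTop] (· ^ N)}) :
    ∃ Q : ℂ[X], ∀ z, f z = Q.eval z := by
  induction N generalizing f with
  | zero =>
    obtain ⟨c, hc⟩ := hf.exists_const_forall_eq_of_bounded
      (isBounded_range_of_dense_rays hf hgrowth (by simpa using hrays))
    exact ⟨Polynomial.C c, by simpa using hc⟩
  | succ N ih =>
    have hdslope : Differentiable ℂ (dslope f 0) := differentiableOn_univ.1
      ((differentiableOn_dslope univ_mem).2 hf.differentiableOn)
    obtain ⟨Q, hQ⟩ := ih hdslope (hgrowth.dslope_zero hf)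
      (hrays.mono fun θ hθ => isBigO_dslope_zero_ray hθ)
    refine ⟨Polynomial.C (f 0) + Polynomial.X * Q, fun z => ?_⟩
    have := sub_smul_dslope f 0 z
    rw [sub_zero, smul_eq_mul] at this
    simp [← hQ, this]

theorem dense_setOf_cos_mul_ne_zero {c : ℝ} (hc : c ≠ 0) :
    Dense {θ : ℝ | Real.cos (c * θ) ≠ 0} := by
  refine (Set.Countable.mono (fun θ hθ => ?_)
    (Set.countable_range fun j : ℤ => (2 * j + 1) * Real.pi / 2 / c)).dense_compl ℝ
  obtain ⟨j, hj⟩ := Real.cos_eq_zero_iff.1 hθ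
  exact ⟨j, by simp only [← hj, mul_div_cancel_left₀ _ hc]⟩

end PhragmenLindelof

section LiouvilleGreen

theorem le_mul_pow_mul_exp_of_deriv_le {f s s' : ℝ → ℝ} {N : ℕ} {R r : ℝ} (hR : 0 < R)
    (hf : ∀ t, R ≤ t → ∃ D, HasDerivAt f D t ∧ t * D ≤ (N + t * s' t) * f t)
    (hs : ∀ t, R ≤ t → HasDerivAt s (s' t) t) (hr : R ≤ r) :
    f r ≤ f R / (R ^ N * Real.exp (s R)) * (r ^ N * Real.exp (s r)) := by
  set w : ℝ → ℝ := fun t => t ^ N * Real.exp (s t)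
  have hw {t : ℝ} (ht : R ≤ t) : 0 < w t := by
    have := hR.trans_le ht
    positivity
  have hw' {t : ℝ} (ht : R ≤ t) : HasDerivAt w ((N / t + s' t) * w t) t := by
    refine ((hasDerivAt_pow N t).mul (hs t ht).exp).congr_deriv ?_
    have := (hR.trans_le ht).ne'
    cases N with
    | zero => simp [w, mul_comm]
    | succ N => simp only [w, Nat.add_sub_cancel, pow_succ]; field_simp
  have hquot {t : ℝ} (ht : R ≤ t) : ∃ D ≤ 0, HasDerivAt (fun t => f t / w t) D t := by
    obtain ⟨D, hD, hle⟩ := hf t ht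
    refine ⟨_, div_nonpos_of_nonpos_of_nonneg ?_ (sq_nonneg _), hD.div (hw' ht) (hw ht).ne'⟩
    have ht0 := hR.trans_le ht
    have hD_le : D ≤ (N / t + s' t) * f t := by
      refine le_of_mul_le_mul_left (hle.trans_eq ?_) ht0
      field_simp
    nlinarith [hw ht]
  have hanti : AntitoneOn (fun t => f t / w t) (Set.Ici R) := by
    refine antitoneOn_of_deriv_nonpos (convex_Ici R) (fun t ht => ?_) (fun t ht => ?_)
      fun t ht => ?_
    · obtain ⟨D, -, hD⟩ := hquot ht
      exact hD.continuousAt.continuousWithinAt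
    all_goals obtain ⟨D, hD0, hD⟩ := hquot (interior_subset ht)
    · exact hD.differentiableAt.differentiableWithinAt
    · exact hD.deriv.trans_le hD0
  rw [← div_le_iff₀ (hw hr)]
  exact hanti Set.self_mem_Ici hr hr

/-- The combination `Y' + P Y`. For a Liouville–Green solution of `Y'' = (P² + ρ) Y` it behaves
like `exp (∫ P)`, while the combination with `-P` behaves like `exp (-∫ P)`. -/
def amplitude (Y Y' P : ℝ → ℂ) (r : ℝ) : ℂ := Y' r + P r * Y r

/-- The equation `Y'' = (P² + ρ) Y` on `[R, ∞)` with both `ρ` and `P'` of size `O(P / r)`, so that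
the Liouville–Green approximation holds up to powers of `r`. -/
structure IsLiouvilleGreen (C R : ℝ) (Y Y' P P' ρ : ℝ → ℂ) : Prop where
  nonneg : 0 ≤ C
  pos : 0 < R
  hasDerivAt : ∀ r, R ≤ r → HasDerivAt Y (Y' r) r
  hasDerivAt_deriv : ∀ r, R ≤ r → HasDerivAt Y' ((P r ^ 2 + ρ r) * Y r) r
  hasDerivAt_symbol : ∀ r, R ≤ r → HasDerivAt P (P' r) r
  bound : ∀ r, R ≤ r → r * (‖ρ r‖ + ‖P' r‖) ≤ C * ‖P r‖

theorem amplitude_sub_amplitude_neg (Y Y' P : ℝ → ℂ) (r : ℝ) :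
    amplitude Y Y' P r - amplitude Y Y' (-P) r = 2 * P r * Y r := by
  simp only [amplitude, Pi.neg_apply]
  ring

theorem two_mul_norm_le_norm_amplitude_add (Y Y' P : ℝ → ℂ) (r : ℝ) :
    2 * ‖P r‖ * ‖Y r‖ ≤ ‖amplitude Y Y' P r‖ + ‖amplitude Y Y' (-P) r‖ := by
  simpa [amplitude_sub_amplitude_neg] using
    norm_sub_le (amplitude Y Y' P r) (amplitude Y Y' (-P) r)

theorem sq_norm_amplitude_sub_four_mul_sq_le (Y Y' P : ℝ → ℂ) (r : ℝ) :
    ‖amplitude Y Y' P r‖ ^ 2 - 4 * ‖amplitude Y Y' (-P) r‖ ^ 2 ≤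
      16 / 3 * (‖P r‖ * ‖Y r‖) ^ 2 := by
  have hdiff := norm_sub_norm_le (amplitude Y Y' P r) (amplitude Y Y' (-P) r)
  rw [amplitude_sub_amplitude_neg, norm_mul, norm_mul, norm_ofNat, mul_assoc] at hdiff
  have hsq := pow_le_pow_left₀ (norm_nonneg (amplitude Y Y' P r)) (sub_le_iff_le_add.1 hdiff) 2
  nlinarith [sq_nonneg (3 * ‖amplitude Y Y' (-P) r‖ - 2 * (‖P r‖ * ‖Y r‖))]

namespace IsLiouvilleGreen

variable {C R : ℝ} {Y Y' P P' ρ : ℝ → ℂ}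

theorem neg (h : IsLiouvilleGreen C R Y Y' P P' ρ) : IsLiouvilleGreen C R Y Y' (-P) (-P') ρ where
  nonneg := h.nonneg
  pos := h.pos
  hasDerivAt := h.hasDerivAt
  hasDerivAt_deriv := by simpa using h.hasDerivAt_deriv
  hasDerivAt_symbol r hr := (h.hasDerivAt_symbol r hr).neg
  bound := by simpa using h.bound

theorem hasDerivAt_amplitude (h : IsLiouvilleGreen C R Y Y' P P' ρ) {r : ℝ} (hr : R ≤ r) :
    HasDerivAt (amplitude Y Y' P) (P r * amplitude Y Y' P r + (ρ r + P' r) * Y r) r := by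
  refine ((h.hasDerivAt_deriv r hr).add
    ((h.hasDerivAt_symbol r hr).mul (h.hasDerivAt r hr))).congr_deriv ?_
  rw [amplitude]
  ring

theorem norm_remainder_le (h : IsLiouvilleGreen C R Y Y' P P' ρ) {r : ℝ} (hr : R ≤ r) :
    2 * (r * ‖(ρ r + P' r) * Y r‖) ≤
      C * (‖amplitude Y Y' P r‖ + ‖amplitude Y Y' (-P) r‖) := by
  have hr0 : 0 < r := h.pos.trans_le hr
  have hC := h.nonneg
  calc 2 * (r * ‖(ρ r + P' r) * Y r‖) ≤ 2 * (r * (‖ρ r‖ + ‖P' r‖) * ‖Y r‖) := by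
        rw [norm_mul, ← mul_assoc r]
        gcongr
        exact norm_add_le _ _
    _ ≤ 2 * (C * ‖P r‖ * ‖Y r‖) := by
        gcongr 2 * (?_ * _)
        exact h.bound r hr
    _ = C * (2 * ‖P r‖ * ‖Y r‖) := by ring
    _ ≤ _ := by
        gcongr
        exact two_mul_norm_le_norm_amplitude_add Y Y' P r

theorem exists_hasDerivAt_norm_sq_amplitude (h : IsLiouvilleGreen C R Y Y' P P' ρ) {r : ℝ}
    (hr : R ≤ r) : ∃ D, HasDerivAt (fun t => ‖amplitude Y Y' P t‖ ^ 2) D r ∧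
      |r * D - 2 * (r * (P r).re) * ‖amplitude Y Y' P r‖ ^ 2| ≤
        C * ‖amplitude Y Y' P r‖ * (‖amplitude Y Y' P r‖ + ‖amplitude Y Y' (-P) r‖) := by
  refine ⟨_, (h.hasDerivAt_amplitude hr).norm_sq, ?_⟩
  set a := amplitude Y Y' P r
  set E := (ρ r + P' r) * Y r
  have hinner : inner ℝ a (P r * a) = (P r).re * ‖a‖ ^ 2 := by
    rw [Complex.inner, mul_assoc, mul_conj, normSq_eq_norm_sq, re_mul_ofReal]
  have hsplit : r * (2 * inner ℝ a (P r * a + E)) - 2 * (r * (P r).re) * ‖a‖ ^ 2 =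
      2 * r * inner ℝ a E := by
    rw [inner_add_right, hinner]
    ring
  have hr0 : 0 ≤ r := h.pos.le.trans hr
  have := h.nonneg
  calc |r * (2 * inner ℝ a (P r * a + E)) - 2 * (r * (P r).re) * ‖a‖ ^ 2|
      = 2 * r * |inner ℝ a E| := by rw [hsplit, abs_mul, abs_of_nonneg (by positivity)]
    _ ≤ 2 * r * (‖a‖ * ‖E‖) := by
        gcongr
        exact abs_real_inner_le_norm a E
    _ = ‖a‖ * (2 * (r * ‖E‖)) := by ring
    _ ≤ ‖a‖ * (C * (‖a‖ + ‖amplitude Y Y' (-P) r‖)) := by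
        gcongr _ * ?_
        exact h.norm_remainder_le hr
    _ = _ := by ring

variable {s : ℝ → ℝ} {N : ℕ}

theorem exists_sq_add_sq_le_of_re_nonpos (h : IsLiouvilleGreen C R Y Y' P P' ρ)
    (hre : ∀ r, R ≤ r → (P r).re ≤ 0)
    (hs : ∀ r, R ≤ r → HasDerivAt s (-2 * (P r).re) r) (hN : 2 * C ≤ N) :
    ∃ M, ∀ r, R ≤ r → ‖amplitude Y Y' P r‖ ^ 2 + ‖amplitude Y Y' (-P) r‖ ^ 2 ≤
      M * (r ^ N * Real.exp (s r)) := by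
  refine ⟨_, fun r hr => le_mul_pow_mul_exp_of_deriv_le
    (f := fun r => ‖amplitude Y Y' P r‖ ^ 2 + ‖amplitude Y Y' (-P) r‖ ^ 2) h.pos (fun t ht => ?_)
    hs hr⟩
  obtain ⟨D, hD, hDle⟩ := h.exists_hasDerivAt_norm_sq_amplitude ht
  obtain ⟨D', hD', hDle'⟩ := h.neg.exists_hasDerivAt_norm_sq_amplitude ht
  refine ⟨_, hD.add hD', ?_⟩
  rw [abs_le] at hDle hDle'
  rw [neg_neg, Pi.neg_apply, neg_re] at hDle'
  have hx : t * (P t).re ≤ 0 := mul_nonpos_of_nonneg_of_nonpos (h.pos.le.trans ht) (hre t ht)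
  generalize ‖amplitude Y Y' P t‖ = a at *
  generalize ‖amplitude Y Y' (-P) t‖ = b at *
  have hremainder : C * (a + b) ^ 2 ≤ N * (a ^ 2 + b ^ 2) :=
    calc C * (a + b) ^ 2 ≤ C * (2 * (a ^ 2 + b ^ 2)) :=
          mul_le_mul_of_nonneg_left add_sq_le h.nonneg
      _ = 2 * C * (a ^ 2 + b ^ 2) := by ring
      _ ≤ N * (a ^ 2 + b ^ 2) := by gcongr
  have hgain : t * (P t).re * a ^ 2 ≤ 0 := mul_nonpos_of_nonpos_of_nonneg hx (sq_nonneg a)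
  linarith

theorem exists_hasDerivAt_four_mul_sq_sub_sq (h : IsLiouvilleGreen C R Y Y' P P' ρ) {r : ℝ}
    {k : ℕ} (hr : R ≤ r) (hre : 2 * C + k ≤ r * (P r).re) :
    ∃ D, HasDerivAt (fun t => 4 * ‖amplitude Y Y' (-P) t‖ ^ 2 - ‖amplitude Y Y' P t‖ ^ 2) D r ∧
      r * D ≤ 2 * k * (4 * ‖amplitude Y Y' (-P) r‖ ^ 2 - ‖amplitude Y Y' P r‖ ^ 2) := by
  obtain ⟨D, hD, hDle⟩ := h.exists_hasDerivAt_norm_sq_amplitude hr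
  obtain ⟨D', hD', hDle'⟩ := h.neg.exists_hasDerivAt_norm_sq_amplitude hr
  refine ⟨_, (hD'.const_mul 4).sub hD, ?_⟩
  rw [abs_le] at hDle hDle'
  rw [neg_neg, Pi.neg_apply, neg_re] at hDle'
  generalize ‖amplitude Y Y' P r‖ = a at *
  generalize ‖amplitude Y Y' (-P) r‖ = b at *
  have hgain : (2 * C + k) * (a ^ 2 + 4 * b ^ 2) ≤ r * (P r).re * (a ^ 2 + 4 * b ^ 2) := by gcongr
  have hremainder : C * (a ^ 2 + 5 * (a * b) + 4 * b ^ 2) ≤ C * (4 * (a ^ 2 + 4 * b ^ 2)) :=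
    mul_le_mul_of_nonneg_left (by nlinarith [sq_nonneg (a - 2 * b)]) h.nonneg
  have hk : 0 ≤ k * b ^ 2 := by positivity
  linarith

theorem norm_amplitude_le_two_mul_of_tendsto (h : IsLiouvilleGreen C R Y Y' P P' ρ) {D : ℝ} {k : ℕ}
    (hre : ∀ r, R ≤ r → 2 * C + k ≤ r * (P r).re) (hP : ∀ r, R ≤ r → ‖P r‖ ≤ D * r ^ k)
    (hY : Tendsto Y atTop (𝓝 0)) {r : ℝ} (hr : R ≤ r) :
    ‖amplitude Y Y' P r‖ ≤ 2 * ‖amplitude Y Y' (-P) r‖ := by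
  set f : ℝ → ℝ := fun t => 4 * ‖amplitude Y Y' (-P) t‖ ^ 2 - ‖amplitude Y Y' P t‖ ^ 2
  -- Once `f < 0`, `-f` grows at least like `t ^ (2 * k)`; but `-f = O(‖P Y‖²) = o(t ^ (2 * k))`.
  by_contra! hlt
  have hr0 : 0 < r := h.pos.trans_le hr
  have hfr : f r < 0 := by nlinarith [norm_nonneg (amplitude Y Y' (-P) r)]
  have hgrow (t : ℝ) (ht : r ≤ t) : f t ≤ f r / r ^ (2 * k) * t ^ (2 * k) := by
    have := le_mul_pow_mul_exp_of_deriv_le (f := f) (s := 0) (s' := 0) (N := 2 * k) hr0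
      (fun t ht => by
        simpa using h.exists_hasDerivAt_four_mul_sq_sub_sq (hr.trans ht) (hre t (hr.trans ht)))
      (fun t _ => hasDerivAt_const t 0) ht
    simpa using this
  have hsmall (t : ℝ) (ht : r ≤ t) : -f t ≤ 16 / 3 * (D * ‖Y t‖) ^ 2 * t ^ (2 * k) := by
    calc -f t ≤ 16 / 3 * (‖P t‖ * ‖Y t‖) ^ 2 := by
          linarith [sq_norm_amplitude_sub_four_mul_sq_le Y Y' P t]
      _ ≤ 16 / 3 * (D * t ^ k * ‖Y t‖) ^ 2 := by
          gcongr
          exact hP t (hr.trans ht)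
      _ = _ := by ring
  have hlim : Tendsto (fun t => 16 / 3 * (D * ‖Y t‖) ^ 2) atTop (𝓝 0) := by
    simpa using ((hY.norm.const_mul D).pow 2).const_mul (16 / 3)
  have hle : -(f r / r ^ (2 * k)) ≤ 0 := ge_of_tendsto hlim <| by
    filter_upwards [eventually_ge_atTop r] with t ht
    have ht0 : 0 < t := hr0.trans_le ht
    exact le_of_mul_le_mul_right (by linarith [hgrow t ht, hsmall t ht]) (pow_pos ht0 (2 * k))
  exact hle.not_gt (neg_pos.2 (div_neg_of_neg_of_pos hfr (by positivity)))

theorem exists_sq_add_sq_le_of_norm_amplitude_le (h : IsLiouvilleGreen C R Y Y' P P' ρ)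
    (hle : ∀ r, R ≤ r → ‖amplitude Y Y' P r‖ ≤ 2 * ‖amplitude Y Y' (-P) r‖)
    (hs : ∀ r, R ≤ r → HasDerivAt s (-2 * (P r).re) r) (hN : 3 * C ≤ N) :
    ∃ M, ∀ r, R ≤ r → ‖amplitude Y Y' P r‖ ^ 2 + ‖amplitude Y Y' (-P) r‖ ^ 2 ≤
      M * (r ^ N * Real.exp (s r)) := by
  have hdom (t : ℝ) (ht : R ≤ t) : ∃ D, HasDerivAt (fun t => ‖amplitude Y Y' (-P) t‖ ^ 2) D t ∧
      t * D ≤ (N + t * (-2 * (P t).re)) * ‖amplitude Y Y' (-P) t‖ ^ 2 := by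
    obtain ⟨D, hD, hDle⟩ := h.neg.exists_hasDerivAt_norm_sq_amplitude ht
    refine ⟨D, hD, ?_⟩
    rw [abs_le, neg_neg, Pi.neg_apply, neg_re] at hDle
    have hab := hle t ht
    generalize ‖amplitude Y Y' P t‖ = a at *
    have hb : 0 ≤ ‖amplitude Y Y' (-P) t‖ := norm_nonneg _
    generalize ‖amplitude Y Y' (-P) t‖ = b at *
    have hremainder : C * b * (b + a) ≤ N * b ^ 2 :=
      calc C * b * (b + a) ≤ C * b * (b + 2 * b) :=
            mul_le_mul_of_nonneg_left (by gcongr) (mul_nonneg h.nonneg hb)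
        _ = 3 * C * b ^ 2 := by ring
        _ ≤ N * b ^ 2 := by gcongr
    linarith
  refine ⟨5 * (‖amplitude Y Y' (-P) R‖ ^ 2 / (R ^ N * Real.exp (s R))), fun r hr => ?_⟩
  rw [mul_assoc]
  refine le_trans ?_ (mul_le_mul_of_nonneg_left
    (le_mul_pow_mul_exp_of_deriv_le h.pos hdom hs hr) (by norm_num))
  have := pow_le_pow_left₀ (norm_nonneg _) (hle r hr) 2
  linarith

end IsLiouvilleGreen

theorem isBigO_pow_mul_exp_of_sq_add_sq_le {Y Y' P : ℝ → ℂ} {s : ℝ → ℝ} {N : ℕ} {c M R : ℝ}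
    (hP : ∀ r, R ≤ r → 1 ≤ c * ‖P r‖)
    (hM : ∀ r, R ≤ r → ‖amplitude Y Y' P r‖ ^ 2 + ‖amplitude Y Y' (-P) r‖ ^ 2 ≤
      M * (r ^ N * Real.exp (2 * s r))) :
    Y =O[atTop] fun r => r ^ N * Real.exp (s r) := by
  refine IsBigO.of_pow two_ne_zero (IsBigO.of_bound (c ^ 2 * |M|) ?_)
  filter_upwards [eventually_ge_atTop R, eventually_ge_atTop 1] with r hr hr1
  have hY : ‖Y r‖ ^ 2 ≤ c ^ 2 * (‖P r‖ * ‖Y r‖) ^ 2 :=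
    calc ‖Y r‖ ^ 2 ≤ (c * ‖P r‖ * ‖Y r‖) ^ 2 := by
          gcongr
          exact le_mul_of_one_le_left (norm_nonneg _) (hP r hr)
      _ = c ^ 2 * (‖P r‖ * ‖Y r‖) ^ 2 := by ring
  have hPY : (‖P r‖ * ‖Y r‖) ^ 2 ≤ ‖amplitude Y Y' P r‖ ^ 2 + ‖amplitude Y Y' (-P) r‖ ^ 2 := by
    have := pow_le_pow_left₀ (by positivity) (two_mul_norm_le_norm_amplitude_add Y Y' P r) 2
    nlinarith [add_sq_le (a := ‖amplitude Y Y' P r‖) (b := ‖amplitude Y Y' (-P) r‖)]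
  rw [Pi.pow_apply, Pi.pow_apply, norm_pow, norm_pow, Real.norm_of_nonneg (by positivity), mul_pow,
    ← Real.exp_nat_mul]
  calc ‖Y r‖ ^ 2 ≤ c ^ 2 * (M * (r ^ N * Real.exp (2 * s r))) :=
        hY.trans (mul_le_mul_of_nonneg_left (hPY.trans (hM r hr)) (sq_nonneg c))
    _ ≤ c ^ 2 * (|M| * ((r ^ N) ^ 2 * Real.exp (2 * s r))) := by
        gcongr
        · exact le_abs_self M
        · exact le_self_pow₀ (one_le_pow₀ hr1) two_ne_zero
    _ = c ^ 2 * |M| * ((r ^ N) ^ 2 * Real.exp (2 * s r)) := by ring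

theorem IsLiouvilleGreen.isBigO_pow_mul_exp {C R c D : ℝ} {Y Y' P P' ρ : ℝ → ℂ} {s : ℝ → ℝ}
    {k N : ℕ} (h : IsLiouvilleGreen C R Y Y' P P' ρ) (hN : 3 * C ≤ N)
    (hs : ∀ r, R ≤ r → HasDerivAt s (-(P r).re) r) (hP : ∀ r, R ≤ r → 1 ≤ c * ‖P r‖)
    (hPk : ∀ r, R ≤ r → ‖P r‖ ≤ D * r ^ k)
    (hre : (∀ r, R ≤ r → (P r).re ≤ 0) ∨
      (∀ r, R ≤ r → 2 * C + k ≤ r * (P r).re) ∧ Tendsto Y atTop (𝓝 0)) :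
    Y =O[atTop] fun r => r ^ N * Real.exp (s r) := by
  have hs2 (r : ℝ) (hr : R ≤ r) : HasDerivAt (fun t => 2 * s t) (-2 * (P r).re) r :=
    ((hs r hr).const_mul 2).congr_deriv (by ring)
  obtain ⟨M, hM⟩ : ∃ M, ∀ r, R ≤ r → ‖amplitude Y Y' P r‖ ^ 2 + ‖amplitude Y Y' (-P) r‖ ^ 2 ≤
      M * (r ^ N * Real.exp (2 * s r)) := by
    rcases hre with hre | ⟨hre, hY⟩
    · exact h.exists_sq_add_sq_le_of_re_nonpos hre hs2 (by linarith [h.nonneg])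
    · exact h.exists_sq_add_sq_le_of_norm_amplitude_le
        (fun r hr => h.norm_amplitude_le_two_mul_of_tendsto hre hPk hY hr) hs2 hN
  exact isBigO_pow_mul_exp_of_sq_add_sq_le hP hM

end LiouvilleGreen

section Rays

theorem hasDerivAt_comp_ofReal_mul {f : ℂ → ℂ} {f' e : ℂ} {r : ℝ} (hf : HasDerivAt f f' (r * e)) :
    HasDerivAt (fun t : ℝ => f (t * e)) (e * f') r := by
  simpa [mul_comm e] using (hf.comp (r : ℂ) ((hasDerivAt_id' (r : ℂ)).mul_const e)).comp_ofReal

variable {y y' : ℂ → ℂ} {F p φ : ℂ[X]} {k N : ℕ} {C R θ : ℝ}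

theorem isLiouvilleGreen_ray (hy : ∀ z, HasDerivAt y (y' z) z)
    (hy' : ∀ z, HasDerivAt y' (F.eval z * y z) z) {e : ℂ} (he : ‖e‖ = 1) (hC : 0 ≤ C) (hR : 0 < R)
    (hbound : ∀ r : ℝ, R ≤ r → ‖(r * e : ℂ)‖ * (‖(F - p ^ 2).eval (r * e)‖ +
      ‖p.derivative.eval (r * e)‖) ≤ C * ‖p.eval (r * e)‖) :
    IsLiouvilleGreen C R (fun r => y (r * e)) (fun r => e * y' (r * e))
      (fun r => e * p.eval (r * e)) (fun r => e * (e * p.derivative.eval (r * e)))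
      (fun r => e ^ 2 * (F - p ^ 2).eval (r * e)) where
  nonneg := hC
  pos := hR
  hasDerivAt r _ := hasDerivAt_comp_ofReal_mul (hy _)
  hasDerivAt_deriv r _ := by
    refine ((hasDerivAt_comp_ofReal_mul (hy' _)).const_mul e).congr_deriv ?_
    rw [Polynomial.eval_sub, Polynomial.eval_pow]
    ring
  hasDerivAt_symbol r _ := (hasDerivAt_comp_ofReal_mul (p.hasDerivAt _)).const_mul e
  bound r hr := by
    have hr0 : 0 < r := hR.trans_le hr
    simpa [he, abs_of_pos hr0] using hbound r hr

theorem exists_eventually_mul_norm_le (hp : p.Monic) (hpk : p.natDegree = k)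
    (hrem : (F - p ^ 2).degree < k) : ∃ C, 0 ≤ C ∧ ∀ᶠ z in cobounded ℂ,
      ‖z‖ * (‖(F - p ^ 2).eval z‖ + ‖p.derivative.eval z‖) ≤ C * ‖p.eval z‖ := by
  have hbigO {q : ℂ[X]} (hq : q.degree < p.degree) :
      (fun z => z * q.eval z) =O[cobounded ℂ] fun z => p.eval z := by
    have hXq : (Polynomial.X * q).degree ≤ p.degree := by
      rw [Polynomial.degree_mul, Polynomial.degree_X, add_comm]
      exact Nat.WithBot.add_one_le_of_lt hq
    simpa using Polynomial.isBigO_cobounded_of_degree_le hXq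
  have hp_deg : p.degree = k := hpk ▸ Polynomial.degree_eq_natDegree hp.ne_zero
  have hsum := (hbigO (hp_deg.symm ▸ hrem)).norm_left.add
    (hbigO (Polynomial.degree_derivative_lt hp.ne_zero)).norm_left
  obtain ⟨C, hC, hC'⟩ := hsum.exists_nonneg
  refine ⟨C, hC, hC'.bound.mono fun z hz => ?_⟩
  rw [Real.norm_of_nonneg (by positivity)] at hz
  simpa [mul_add] using hz

theorem re_ray_eventually_le_or_ge (hp : p.Monic) (hpk : p.natDegree = k) (B : ℝ)
    (hθ : Real.cos ((k + 1 : ℕ) * θ) ≠ 0) :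
    (∀ᶠ r : ℝ in atTop, (exp (θ * I) * p.eval (r * exp (θ * I))).re ≤ 0) ∨
      0 < Real.cos ((k + 1 : ℕ) * θ) ∧
        ∀ᶠ r : ℝ in atTop, B ≤ r * (exp (θ * I) * p.eval (r * exp (θ * I))).re := by
  have hG : (Polynomial.X * p).Monic := Polynomial.monic_X.mul hp
  have hGk : (Polynomial.X * p).natDegree = k + 1 := by
    rw [Polynomial.natDegree_X_mul hp.ne_zero, hpk]
  have hre (r : ℝ) : ((Polynomial.X * p).eval (r * exp (θ * I))).re =
      r * (exp (θ * I) * p.eval (r * exp (θ * I))).re := by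
    rw [Polynomial.eval_mul, Polynomial.eval_X, mul_assoc, re_ofReal_mul]
  have hGk0 : (Polynomial.X * p).natDegree ≠ 0 := hGk.symm ▸ k.succ_ne_zero
  rw [← hGk] at hθ ⊢
  obtain hneg | hpos := hθ.lt_or_gt
  · left
    filter_upwards [(tendsto_re_eval_ray_atBot hG hGk0 hneg).eventually_le_atBot 0,
      eventually_gt_atTop 0] with r hr hr0
    rw [hre] at hr
    exact nonpos_of_mul_nonpos_right hr hr0
  · right
    refine ⟨hpos, ((tendsto_re_eval_ray_atTop hG hGk0 hpos).eventually_ge_atTop B).mono ?_⟩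
    exact fun r hr => (hre r).subst (motive := (B ≤ ·)) hr

theorem isBigO_pow_mul_exp_ray (hy : ∀ z, HasDerivAt y (y' z) z)
    (hy' : ∀ z, HasDerivAt y' (F.eval z * y z) z) (hp : p.Monic) (hpk : p.natDegree = k)
    (hφ : φ.derivative = -p) (hC : 0 ≤ C) (hbound : ∀ᶠ z in cobounded ℂ,
      ‖z‖ * (‖(F - p ^ 2).eval z‖ + ‖p.derivative.eval z‖) ≤ C * ‖p.eval z‖) (hN : 3 * C ≤ N)
    (hθ : Real.cos ((k + 1 : ℕ) * θ) ≠ 0) (hdecay : 0 < Real.cos ((k + 1 : ℕ) * θ) →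
      Tendsto (fun r : ℝ => y (r * exp (θ * I))) atTop (𝓝 0)) :
    (fun r : ℝ => y (r * exp (θ * I))) =O[atTop]
      fun r => r ^ N * Real.exp (φ.eval (r * exp (θ * I))).re := by
  have he : ‖exp (θ * I)‖ = 1 := norm_exp_ofReal_mul_I θ
  have hp_deg : p.degree = k := hpk ▸ Polynomial.degree_eq_natDegree hp.ne_zero
  obtain ⟨c, hc⟩ := (Polynomial.isBigO_cobounded_of_degree_le (P := 1) (Q := p)
    (by rw [Polynomial.degree_one, hp_deg]; exact_mod_cast k.zero_le)).bound
  obtain ⟨D, hD⟩ := (Polynomial.isBigO_cobounded_of_degree_le (P := p) (Q := Polynomial.X ^ k)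
    (by rw [Polynomial.degree_X_pow, hp_deg])).bound
  set P : ℝ → ℂ := fun r => exp (θ * I) * p.eval (r * exp (θ * I))
  have hcases : ∀ᶠ R in atTop, (∀ r, R ≤ r → (P r).re ≤ 0) ∨ (∀ r, R ≤ r →
      2 * C + k ≤ r * (P r).re) ∧ Tendsto (fun r : ℝ => y (r * exp (θ * I))) atTop (𝓝 0) := by
    rcases re_ray_eventually_le_or_ge hp hpk (2 * C + k) hθ with h | ⟨hpos, h⟩
    · exact (eventually_forall_ge_atTop.2 h).mono fun _ => .inl
    · exact (eventually_forall_ge_atTop.2 h).mono fun _ h => .inr ⟨h, hdecay hpos⟩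
  obtain ⟨R, hR, hre, hlarge⟩ := ((eventually_gt_atTop 0).and (hcases.and
    (eventually_forall_ge_atTop.2 ((tendsto_ofReal_mul_exp_cobounded θ).eventually
      (hbound.and (hc.and hD)))))).exists
  refine (isLiouvilleGreen_ray hy hy' he hC hR fun r hr => (hlarge r hr).1).isBigO_pow_mul_exp
    (c := c) (D := D) hN (fun r _ => ?_) (fun r hr => ?_) (fun r hr => ?_) hre
  · refine (reCLM.hasFDerivAt.comp_hasDerivAt r
      (hasDerivAt_comp_ofReal_mul (φ.hasDerivAt _))).congr_deriv ?_
    simp [hφ]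
  · simpa [he] using (hlarge r hr).2.1
  · simpa [he, abs_of_pos (hR.trans_le hr)] using (hlarge r hr).2.2

theorem isBigO_mul_exp_neg {ι : Type*} {l : Filter ι} {Y Φ : ι → ℂ} {g : ι → ℝ}
    (h : Y =O[l] fun r => g r * Real.exp (Φ r).re) : (fun r => Y r * exp (-Φ r)) =O[l] g := by
  have hexp : (fun r => exp (-Φ r)) =O[l] fun r => Real.exp (-(Φ r).re) :=
    .of_bound 1 (.of_forall fun r => by simp [Complex.norm_exp])
  exact (h.mul hexp).congr_right fun r => by rw [mul_assoc, ← Real.exp_add, add_neg_cancel,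
    Real.exp_zero, mul_one]

end Rays

section Subdominance

theorem exists_abs_sub_int_mul_two_pi_lt_of_cos_pos {x : ℝ} (hx : 0 < Real.cos x) :
    ∃ s : ℤ, |x - s * (2 * Real.pi)| < Real.pi / 2 := by
  obtain ⟨s, hs⟩ := Real.Angle.angle_eq_iff_two_pi_dvd_sub.1 (Real.Angle.coe_toReal x).symm
  refine ⟨s, ?_⟩
  rw [mul_comm, ← hs, sub_sub_cancel]
  exact Real.Angle.cos_pos_iff_abs_toReal_lt_pi_div_two.1 ((Real.Angle.cos_coe x).symm ▸ hx)

theorem exists_dirIn_of_cos_pos {m : ℕ} (hm : 0 < m) {θ : ℝ} (hθ : 0 < Real.cos (m * θ)) :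
    ∃ i < m, ∃ t : ℤ, DirIn (2 * m) (2 * i) (θ - t * (2 * Real.pi)) := by
  have hm0 : (0 : ℝ) < m := Nat.cast_pos.2 hm
  have hmz : (0 : ℤ) < m := Nat.cast_pos.2 hm
  obtain ⟨s, hs⟩ := exists_abs_sub_int_mul_two_pi_lt_of_cos_pos hθ
  obtain ⟨i, hi⟩ := Int.eq_ofNat_of_zero_le (Int.emod_nonneg s hmz.ne')
  have him : i < m := by
    have := Int.emod_lt_of_pos s hmz
    omega
  have hdiv : (m : ℝ) * (s / m : ℤ) + i = s := by
    have := Int.mul_ediv_add_emod s m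
    rw [hi] at this
    exact_mod_cast this
  refine ⟨i, him, s / m, ?_⟩
  have hcenter : θ - (s / m : ℤ) * (2 * Real.pi) - 2 * Real.pi * (2 * i : ℕ) / (2 * m : ℕ) =
      (m * θ - s * (2 * Real.pi)) / m := by
    rw [← hdiv]
    push_cast
    field_simp
    ring
  rw [DirIn, hcenter, abs_div, abs_of_pos hm0, Nat.cast_mul, Nat.cast_ofNat, ← div_div]
  exact (div_lt_div_iff_of_pos_right hm0).2 hs

theorem tendsto_ray_of_cos_pos {m : ℕ} (hm : 0 < m) {y : ℂ → ℂ}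
    (hsub : ∀ i < m, Subdominant (2 * m) (2 * i) y) {θ : ℝ} (hθ : 0 < Real.cos (m * θ)) :
    Tendsto (fun r : ℝ => y (r * exp (θ * I))) atTop (𝓝 0) := by
  obtain ⟨i, hi, t, hdir⟩ := exists_dirIn_of_cos_pos hm hθ
  have hexp : exp ((θ - t * (2 * Real.pi) : ℝ) * I) = exp (θ * I) := by
    rw [Complex.exp_eq_exp_iff_exists_int]
    exact ⟨-t, by push_cast; ring⟩
  simpa only [hexp] using hsub i hi _ hdir

end Subdominance

section Representation

variable {y y' g : ℂ → ℂ} {F Q : ℂ[X]} {k : ℕ}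

theorem exists_eq_eval_mul_exp_eval (hy : ∀ z, HasDerivAt y (y' z) z)
    (hy' : ∀ z, HasDerivAt y' (F.eval z * y z) z) (hF : F.Monic) (hFk : F.natDegree = 2 * k)
    (hdecay : ∀ θ : ℝ, 0 < Real.cos ((k + 1 : ℕ) * θ) →
      Tendsto (fun r : ℝ => y (r * exp (θ * I))) atTop (𝓝 0)) :
    ∃ Q φ : ℂ[X], φ.natDegree = k + 1 ∧ ∀ z, y z = Q.eval z * exp (φ.eval z) := by
  obtain ⟨p, hp, hpk, hrem⟩ := exists_monic_degree_sub_sq_lt hF hFk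
  obtain ⟨φ, hφ⟩ := polynomial_derivative_surjective (-p)
  have hφk : φ.natDegree = k + 1 := by
    have hdeg := Polynomial.natDegree_derivative φ
    rw [hφ, Polynomial.natDegree_neg, hpk] at hdeg
    have hφ0 : φ.natDegree ≠ 0 := fun h => hp.ne_zero <| neg_eq_zero.1 <|
      hφ ▸ Polynomial.derivative_of_natDegree_zero h
    omega
  obtain ⟨C, hC, hbound⟩ := exists_eventually_mul_norm_le hp hpk hrem
  have hu : Differentiable ℂ fun z => y z * exp ((-φ).eval z) := fun z =>
    (hy z).differentiableAt.mul ((-φ).differentiable z).cexp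
  have hgrowth := (HasExpGrowth.of_hasDerivAt hFk.le hy hy').mul
    (.exp_eval ((Polynomial.natDegree_neg φ).trans hφk).le)
  obtain ⟨Q, hQ⟩ := exists_polynomial_of_dense_rays hu hgrowth ⌈3 * C⌉₊ <|
    (dense_setOf_cos_mul_ne_zero (Nat.cast_ne_zero.2 k.succ_ne_zero)).mono fun θ hθ => by
      simpa only [Set.mem_ofPred_eq, Polynomial.eval_neg] using isBigO_mul_exp_neg
        (isBigO_pow_mul_exp_ray hy hy' hp hpk hφ hC hbound (Nat.le_ceil _) hθ (hdecay θ))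
  refine ⟨Q, φ, hφk, fun z => ?_⟩
  rw [← hQ, Polynomial.eval_neg, mul_assoc, ← Complex.exp_add, neg_add_cancel, Complex.exp_zero,
    mul_one]

theorem preimage_zero_eq_of_eq_eval_mul_exp (hy0 : y ≠ 0)
    (hyQ : ∀ z, y z = Q.eval z * exp (g z)) : y ⁻¹' {0} = Q.roots.toFinset := by
  have hQ : Q ≠ 0 := by
    rintro rfl
    exact hy0 (funext fun z => by simp [hyQ])
  ext z
  simp [hyQ, hQ]

theorem separable_of_eq_eval_mul_exp (hy : ∀ z, HasDerivAt y (y' z) z)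
    (hsimple : ∀ z, y z = 0 → y' z ≠ 0) (hg : Differentiable ℂ g)
    (hyQ : ∀ z, y z = Q.eval z * exp (g z)) : Q.Separable := by
  refine (Polynomial.isCoprime_iff_aeval_ne_zero_of_isAlgClosed ℂ ℂ _ _).2 fun z => ?_
  rw [Polynomial.coe_aeval_eq_eval]
  refine not_and_or.1 fun ⟨hz, hz'⟩ => hsimple z (by rw [hyQ, hz, zero_mul]) ?_
  have hderiv := (Q.hasDerivAt z).mul (hg z).hasDerivAt.cexp
  rw [(hy z).unique (hderiv.congr_of_eventuallyEq (.of_forall hyQ)), hz, hz']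
  simp

theorem natDegree_eq_ncard_roots_of_separable {K : Type*} [Field K] [IsAlgClosed K]
    [DecidableEq K] {Q : K[X]} (hQ : Q.Separable) :
    Q.natDegree = (Q.roots.toFinset : Set K).ncard := by
  rw [Set.ncard_coe_finset, Multiset.toFinset_card_of_nodup (Polynomial.nodup_roots hQ),
    IsAlgClosed.card_roots_eq_natDegree]

end Representation

theorem exists_polynomial_eval_eq_Pol_sub {d : ℕ} (hd : 2 ≤ d) (α : Fin (d - 1) → ℂ) (lam : ℂ) :
    ∃ F : ℂ[X], F.Monic ∧ F.natDegree = d ∧ ∀ z, F.eval z = Pol d α z - lam := by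
  set L : ℂ[X] := ∑ i : Fin (d - 1), Polynomial.C (α i) * Polynomial.X ^ ((i : ℕ) + 1)
    - Polynomial.C lam with hL
  have hdeg : L.degree < d := by
    rw [← Polynomial.mem_degreeLT]
    refine sub_mem (sum_mem fun i _ => ?_) ?_ <;> rw [Polynomial.mem_degreeLT]
    · refine (Polynomial.degree_C_mul_X_pow_le _ _).trans_lt (Nat.cast_lt.2 ?_)
      omega
    · exact Polynomial.degree_C_le.trans_lt (Nat.cast_pos.2 (two_pos.trans_le hd))
  refine ⟨Polynomial.X ^ d + L, Polynomial.monic_X_pow_add hdeg, ?_, fun z => ?_⟩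
  · rw [Polynomial.natDegree_add_eq_left_of_degree_lt (by rwa [Polynomial.degree_X_pow]),
      Polynomial.natDegree_X_pow]
  · simp [hL, Pol, Polynomial.eval_finsetSum, add_sub_assoc]

theorem stmt5 (d : ℕ) (hd : 2 ≤ d) (hev : Even d) (n : ℕ) (hn : n = d + 2)
    (α : Fin (d - 1) → ℂ) (lam : ℂ) (y : ℂ → ℂ)
    (hy : IsSol d α lam y) (hy0 : y ≠ 0)
    (hsub : ∀ i : ℕ, i < n / 2 → Subdominant n (2 * i) y) :
    (y ⁻¹' {0}).Finite ∧ (∀ z : ℂ, y z = 0 → deriv y z ≠ 0) ∧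
    ∃ Q φ : Polynomial ℂ, (∀ z : ℂ, y z = Q.eval z * Complex.exp (φ.eval z)) ∧
      Q.natDegree = (y ⁻¹' {0}).ncard ∧ φ.natDegree = (d + 2) / 2 := by
  obtain ⟨k, rfl⟩ : ∃ k, d = 2 * k := hev.two_dvd
  obtain rfl : n = 2 * (k + 1) := by omega
  have hhalf : 2 * (k + 1) / 2 = k + 1 := Nat.mul_div_cancel_left _ two_pos
  rw [hhalf] at hsub
  obtain ⟨hyd, hode⟩ := hy
  obtain ⟨F, hF, hFk, hFeval⟩ := exists_polynomial_eval_eq_Pol_sub hd α lam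
  have hy₁ : ∀ z, HasDerivAt y (deriv y z) z := fun z => (hyd z).hasDerivAt
  have hy₂ : ∀ z, HasDerivAt (deriv y) (F.eval z * y z) z := fun z => by
    rw [hFeval, ← hode]
    exact (hyd.deriv z).hasDerivAt
  have hsimple : ∀ z, y z = 0 → deriv y z ≠ 0 := fun z =>
    deriv_ne_zero_of_eq_zero hy₁ hy₂ F.continuous hy0
  obtain ⟨Q, φ, hφ, hyQ⟩ := exists_eq_eval_mul_exp_eval hy₁ hy₂ hF hFk fun θ =>
    tendsto_ray_of_cos_pos k.succ_pos hsub
  rw [preimage_zero_eq_of_eq_eval_mul_exp hy0 hyQ]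
  have hQ : Q.Separable := separable_of_eq_eval_mul_exp hy₁ hsimple φ.differentiable hyQ
  exact ⟨Finset.finite_toSet _, hsimple, Q, φ, hyQ, natDegree_eq_ncard_roots_of_separable hQ,
    hφ.trans hhalf.symm⟩
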